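/- arXiv:2309.10370 — 2 statements merged into one kernel-verified Lean document; each statement's English description precedes it below -/
import Mathlib

section
/- Assume M = Q and that X̄₀^red ∈ ℝ^{Q×Q} is invertible. Then D₂ := ΔX₀·𝒩⁻¹·ΔX₀ᵀ ∈ ℝ^{Q×Q} is symmetric positive semidefinite, X̄₀^red·(X̄₀^red)ᵀ is symmetric positive definite, and therefore X₀·𝒩⁻¹·X₀ᵀ = X̄₀^red·(X̄₀^red)ᵀ + D₂ is positive definite, in particular invertible. -/
/-!
Since `𝒩` is diagonal with positive entries, `D₂ = ΔX₀ 𝒩⁻¹ ΔX₀ᵀ` is a congruence of a positive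
semidefinite matrix, and `X̄₀^red (X̄₀^red)ᵀ` is positive definite because `X̄₀^red` is invertible.
The identity `X₀ 𝒩⁻¹ X₀ᵀ = X̄₀^red (X̄₀^red)ᵀ + D₂` (`second_moment_eq`) is, entry by entry and class
by class, the formula `E[xy] = E[x]E[y] + Cov(x, y)` for the empirical measure of a class
(`mean_mul_eq`). A positive definite plus a positive semidefinite matrix is positive definite.
-/

open Matrix

noncomputable section

/-- Index type for training inputs: class `j ∈ {1,…,Q}` and sample `i ∈ {1,…,N_j}`. -/
abbrev Idx (Q : ℕ) (Nc : Fin Q → ℕ) : Type := (j : Fin Q) × Fin (Nc j)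

/-- The matrix `X̄₀^red ∈ ℝ^{M×Q}` of class means `x̄_{0,j} = (1/N_j)·Σ_i x_{0,j,i}`. -/
def classMeans {Q M : ℕ} (Nc : Fin Q → ℕ) (X : Matrix (Fin M) (Idx Q Nc) ℝ) :
    Matrix (Fin M) (Fin Q) ℝ :=
  Matrix.of fun m j => (Nc j : ℝ)⁻¹ * ∑ i : Fin (Nc j), X m ⟨j, i⟩

/-- The matrix `X̄₀ ∈ ℝ^{M×N}` with column `x̄_{0,j}` at each position of class `j`. -/
def barX {Q M : ℕ} (Nc : Fin Q → ℕ) (X : Matrix (Fin M) (Idx Q Nc) ℝ) :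
    Matrix (Fin M) (Idx Q Nc) ℝ :=
  Matrix.of fun m p => classMeans Nc X m p.1

/-- The deviation matrix `ΔX₀ := X₀ − X̄₀`. -/
def deltaX {Q M : ℕ} (Nc : Fin Q → ℕ) (X : Matrix (Fin M) (Idx Q Nc) ℝ) :
    Matrix (Fin M) (Idx Q Nc) ℝ := X - barX Nc X

/-- The block-diagonal weight matrix `𝒩 = diag(N_j·1_{N_j×N_j})`. -/
def calN (Q : ℕ) (Nc : Fin Q → ℕ) : Matrix (Idx Q Nc) (Idx Q Nc) ℝ :=
  Matrix.diagonal fun p => (Nc p.1 : ℝ)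

/-- The extended target matrix `Y^ext ∈ ℝ^{Q×N}`: column `y_j` at each position of class `j`. -/
def Yext {Q : ℕ} (Nc : Fin Q → ℕ) (Y : Matrix (Fin Q) (Fin Q) ℝ) :
    Matrix (Fin Q) (Idx Q Nc) ℝ :=
  Matrix.of fun q p => Y q p.1

/-- Entrywise ReLU on matrices: `σ(A)_{kl} = max(0, A_{kl})`. -/
def relu {m n : Type*} (A : Matrix m n ℝ) : Matrix m n ℝ :=
  Matrix.of fun i j => max 0 (A i j)

/-- Euclidean norm of a vector in `ℝ^k`. -/
def enorm {k : ℕ} (v : Fin k → ℝ) : ℝ := Real.sqrt (∑ i, (v i) ^ 2)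

/-- Frobenius (Hilbert–Schmidt) norm `‖B‖_F = √Tr(BBᵀ)`. -/
def frob {m n : Type*} [Fintype m] [Fintype n] (A : Matrix m n ℝ) : ℝ :=
  Real.sqrt (Matrix.trace (A * Aᵀ))

/-- The replicated-bias matrix `b·u_Nᵀ ∈ ℝ^{M×N}`. -/
def colRep {Q M : ℕ} (Nc : Fin Q → ℕ) (b : Fin M → ℝ) : Matrix (Fin M) (Idx Q Nc) ℝ :=
  Matrix.of fun m _ => b m

/-- The weighted `L²_𝒩` norm `‖A‖ = √Tr(A𝒩⁻¹Aᵀ)`. -/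
def l2N {Q M : ℕ} (Nc : Fin Q → ℕ) (A : Matrix (Fin M) (Idx Q Nc) ℝ) : ℝ :=
  Real.sqrt (Matrix.trace (A * (calN Q Nc)⁻¹ * Aᵀ))

/-- `ℓ²→ℓ²` operator norm of a matrix. -/
def opNorm {m n : ℕ} (A : Matrix (Fin m) (Fin n) ℝ) : ℝ :=
  ‖LinearMap.toContinuousLinearMap (Matrix.toEuclideanLin A)‖

/-- Every `N_j` is nonzero, so the inverse is genuine. -/
lemma calN_inv {Q : ℕ} (Nc : Fin Q → ℕ) (hNc : ∀ j, 0 < Nc j) :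
    (calN Q Nc)⁻¹ = Matrix.diagonal fun p => (Nc p.1 : ℝ)⁻¹ := by
  apply Matrix.inv_eq_right_inv
  rw [calN, Matrix.diagonal_mul_diagonal, ← Matrix.diagonal_one]
  congr 1
  funext p
  exact mul_inv_cancel₀ (Nat.cast_ne_zero.mpr (hNc p.1).ne')

/-- The covariance identity `E[xy] = E[x]E[y] + Cov(x, y)` for the uniform measure on `n` points. -/
lemma mean_mul_eq {n : ℕ} (hn : 0 < n) (x y : Fin n → ℝ) :
    ∑ i, x i * (n : ℝ)⁻¹ * y i =
      ((n : ℝ)⁻¹ * ∑ i, x i) * ((n : ℝ)⁻¹ * ∑ i, y i) +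
        ∑ i, (x i - (n : ℝ)⁻¹ * ∑ k, x k) * (n : ℝ)⁻¹ * (y i - (n : ℝ)⁻¹ * ∑ k, y k) := by
  have hn' : (n : ℝ) ≠ 0 := Nat.cast_ne_zero.mpr hn.ne'
  set a := (n : ℝ)⁻¹ * ∑ i, x i with ha
  set b := (n : ℝ)⁻¹ * ∑ i, y i with hb
  have key : ∑ i, (x i - a) * (n : ℝ)⁻¹ * (y i - b) =
      ∑ i, x i * (n : ℝ)⁻¹ * y i - ((n : ℝ)⁻¹ * ∑ i, x i) * b
        - a * ((n : ℝ)⁻¹ * ∑ i, y i) + n * ((n : ℝ)⁻¹ * (a * b)) := by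
    have hc : (n : ℝ) * ((n : ℝ)⁻¹ * (a * b)) = ∑ _i : Fin n, (n : ℝ)⁻¹ * (a * b) := by simp
    rw [hc]
    simp only [Finset.mul_sum, Finset.sum_mul]
    rw [← Finset.sum_sub_distrib, ← Finset.sum_sub_distrib, ← Finset.sum_add_distrib]
    exact Finset.sum_congr rfl fun i _ => by ring
  rw [key, ← ha, ← hb, mul_inv_cancel_left₀ hn']
  ring

/-- Decomposition of the weighted second moment into the contribution of the class means and the
within-class covariance `D₂`; it is the covariance identity summed over the classes. -/
lemma second_moment_eq {Q M : ℕ} (Nc : Fin Q → ℕ) (hNc : ∀ j, 0 < Nc j)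
    (X : Matrix (Fin M) (Idx Q Nc) ℝ) :
    X * (calN Q Nc)⁻¹ * Xᵀ = classMeans Nc X * (classMeans Nc X)ᵀ +
      deltaX Nc X * (calN Q Nc)⁻¹ * (deltaX Nc X)ᵀ := by
  rw [calN_inv Nc hNc]
  ext a b
  simp only [Matrix.add_apply, Matrix.mul_apply (M := _ * Matrix.diagonal _),
    Matrix.mul_diagonal, Matrix.transpose_apply, Fintype.sum_sigma]
  rw [Matrix.mul_apply, ← Finset.sum_add_distrib]
  exact Finset.sum_congr rfl fun j _ =>
    mean_mul_eq (hNc j) (fun i => X a ⟨j, i⟩) (fun i => X b ⟨j, i⟩)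

/-- For `M = Q` with `X̄₀^red` invertible, `D₂ := ΔX₀𝒩⁻¹ΔX₀ᵀ` is symmetric
positive semidefinite, `X̄₀^red(X̄₀^red)ᵀ` is symmetric positive definite, and
`X₀𝒩⁻¹X₀ᵀ = X̄₀^red(X̄₀^red)ᵀ + D₂` is positive definite, in particular invertible. -/
theorem statement10 {Q : ℕ} (Nc : Fin Q → ℕ) (hNc : ∀ j, 0 < Nc j)
    (X₀ : Matrix (Fin Q) (Idx Q Nc) ℝ)
    (hred : IsUnit (classMeans Nc X₀)) :
    (deltaX Nc X₀ * (calN Q Nc)⁻¹ * (deltaX Nc X₀)ᵀ).PosSemidef ∧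
    (classMeans Nc X₀ * (classMeans Nc X₀)ᵀ).PosDef ∧
    X₀ * (calN Q Nc)⁻¹ * X₀ᵀ =
      classMeans Nc X₀ * (classMeans Nc X₀)ᵀ +
        deltaX Nc X₀ * (calN Q Nc)⁻¹ * (deltaX Nc X₀)ᵀ ∧
    (X₀ * (calN Q Nc)⁻¹ * X₀ᵀ).PosDef ∧
    IsUnit (X₀ * (calN Q Nc)⁻¹ * X₀ᵀ) := by
  have hD : (deltaX Nc X₀ * (calN Q Nc)⁻¹ * (deltaX Nc X₀)ᵀ).PosSemidef := by
    have hN : ((calN Q Nc)⁻¹).PosSemidef := by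
      rw [calN_inv Nc hNc]
      exact Matrix.PosSemidef.diagonal fun p => inv_nonneg.mpr (Nat.cast_nonneg _)
    simpa only [Matrix.conjTranspose_eq_transpose_of_trivial] using
      hN.mul_mul_conjTranspose_same (deltaX Nc X₀)
  have hM : (classMeans Nc X₀ * (classMeans Nc X₀)ᵀ).PosDef := by
    simpa only [Matrix.conjTranspose_eq_transpose_of_trivial] using
      Matrix.PosDef.mul_conjTranspose_self (classMeans Nc X₀)
        (Matrix.vecMul_injective_of_isUnit hred)
  have hE := second_moment_eq Nc hNc X₀
  have hP : (X₀ * (calN Q Nc)⁻¹ * X₀ᵀ).PosDef := hE ▸ hM.add_posSemidef hD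
  exact ⟨hD, hM, hE, hP, hP.isUnit⟩
end
end

section
/- Assume M = Q and X̄₀^red ∈ ℝ^{Q×Q} is invertible (so X₀𝒩⁻¹X₀ᵀ is invertible). Then the matrix W₂ := Y·(X̄₀^red)ᵀ·(X₀𝒩⁻¹X₀ᵀ)⁻¹ ∈ ℝ^{Q×Q} satisfies W₂·X₀ = Y^ext·𝒫, where 𝒫 := 𝒩⁻¹X₀ᵀ(X₀𝒩⁻¹X₀ᵀ)⁻¹X₀; equivalently, W₂X₀ − Y^ext = −Y^ext·𝒫^⊥ with 𝒫^⊥ := 1 − 𝒫. -/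
open Matrix

noncomputable section

/-- The identity behind the theorem: averaging the inputs of class `j` with weights `N_j⁻¹`
yields the class mean, so `Y^ext 𝒩⁻¹ X₀ᵀ = Y (X̄₀^red)ᵀ`. -/
theorem Yext_mul_calN_inv_mul_transpose {Q : ℕ} (Nc : Fin Q → ℕ) (hNc : ∀ j, 0 < Nc j)
    (X₀ : Matrix (Fin Q) (Idx Q Nc) ℝ) (Y : Matrix (Fin Q) (Fin Q) ℝ) :
    Yext Nc Y * (calN Q Nc)⁻¹ * X₀ᵀ = Y * (classMeans Nc X₀)ᵀ := by
  have hinv : (calN Q Nc)⁻¹ = Matrix.diagonal fun p => (Nc p.1 : ℝ)⁻¹ := by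
    apply Matrix.inv_eq_right_inv
    rw [calN, Matrix.diagonal_mul_diagonal, ← Matrix.diagonal_one]
    congr 1
    funext p
    exact mul_inv_cancel₀ (Nat.cast_ne_zero.mpr (hNc p.1).ne')
  rw [hinv]
  ext q m
  rw [Matrix.mul_apply, Matrix.mul_apply]
  simp only [Matrix.mul_diagonal, Matrix.transpose_apply, Yext, classMeans,
    Matrix.of_apply, Fintype.sum_sigma, Finset.mul_sum, mul_assoc]

/-- For `M = Q` with `X̄₀^red` invertible,
`W₂ := Y(X̄₀^red)ᵀ(X₀𝒩⁻¹X₀ᵀ)⁻¹` satisfies `W₂X₀ = Y^ext𝒫`, i.e.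
`W₂X₀ − Y^ext = −Y^ext𝒫^⊥` with `𝒫 := 𝒩⁻¹X₀ᵀ(X₀𝒩⁻¹X₀ᵀ)⁻¹X₀` and `𝒫^⊥ := 1 − 𝒫`. -/
theorem statement11 {Q : ℕ} (Nc : Fin Q → ℕ) (hNc : ∀ j, 0 < Nc j)
    (X₀ : Matrix (Fin Q) (Idx Q Nc) ℝ)
    (hred : IsUnit (classMeans Nc X₀))
    (Y : Matrix (Fin Q) (Fin Q) ℝ) :
    (Y * (classMeans Nc X₀)ᵀ * (X₀ * (calN Q Nc)⁻¹ * X₀ᵀ)⁻¹) * X₀ =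
      Yext Nc Y * ((calN Q Nc)⁻¹ * X₀ᵀ * (X₀ * (calN Q Nc)⁻¹ * X₀ᵀ)⁻¹ * X₀) ∧
    (Y * (classMeans Nc X₀)ᵀ * (X₀ * (calN Q Nc)⁻¹ * X₀ᵀ)⁻¹) * X₀ - Yext Nc Y =
      -(Yext Nc Y *
        (1 - (calN Q Nc)⁻¹ * X₀ᵀ * (X₀ * (calN Q Nc)⁻¹ * X₀ᵀ)⁻¹ * X₀)) := by
  have h : (Y * (classMeans Nc X₀)ᵀ * (X₀ * (calN Q Nc)⁻¹ * X₀ᵀ)⁻¹) * X₀ =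
      Yext Nc Y * ((calN Q Nc)⁻¹ * X₀ᵀ * (X₀ * (calN Q Nc)⁻¹ * X₀ᵀ)⁻¹ * X₀) := by
    rw [← Yext_mul_calN_inv_mul_transpose Nc hNc]
    simp only [Matrix.mul_assoc]
  refine ⟨h, ?_⟩
  rw [h, Matrix.mul_sub, Matrix.mul_one, neg_sub]
end
end
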